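/- Let k ≥ 3 be odd, let p ≥ 2, and let T be a tree on n = p·(⌊k/2⌋+1) + 1 vertices of diameter exactly k + 2. Then mdi_k(T) > f_k(n). -/

import Mathlib

/-- `J` is a distance-`k` independent set in `G`: any two distinct vertices of `J`
are at graph distance at least `k + 1`. -/
def DkIndep {V : Type*} (G : SimpleGraph V) (k : ℕ) (J : Set V) : Prop :=
  ∀ ⦃u⦄, u ∈ J → ∀ ⦃v⦄, v ∈ J → u ≠ v → k + 1 ≤ G.dist u v

/-- `J` is a maximal distance-`k` independent set (`k`-MDIS) of `G`. -/
def MaxDkIndep {V : Type*} (G : SimpleGraph V) (k : ℕ) (J : Set V) : Prop :=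
  DkIndep G k J ∧ ∀ J', DkIndep G k J' → J ⊆ J' → J' = J

/-- `mdi G k` is the number of maximal distance-`k` independent sets of `G`. -/
noncomputable def mdi {V : Type*} (G : SimpleGraph V) (k : ℕ) : ℕ :=
  {J : Set V | MaxDkIndep G k J}.ncard

/-- `f_k(n)` from the paper. -/
def fk (k n : ℕ) : ℕ :=
  if n ≤ k + 1 then n else n - (n - k % 2) / (k / 2 + 1) + 1

/-- closed ball `N_k[x]`. -/
def ball {V : Type*} (G : SimpleGraph V) (k : ℕ) (x : V) : Set V :=
  {v | G.dist x v ≤ k}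

/-- a leaf is a vertex of degree 1. -/
def IsLeaf {V : Type*} (G : SimpleGraph V) (v : V) : Prop :=
  (G.neighborSet v).ncard = 1

/-- eccentricity of a vertex. -/
noncomputable def ecc {V : Type*} [Fintype V] (G : SimpleGraph V) (v : V) : ℕ :=
  Finset.univ.sup (G.dist v)

/-- diameter of a finite graph. -/
noncomputable def gdiam {V : Type*} [Fintype V] (G : SimpleGraph V) : ℕ :=
  Finset.univ.sup (ecc G)

/-- a central vertex is one of minimum eccentricity. -/
def IsCentral {V : Type*} [Fintype V] (G : SimpleGraph V) (v : V) : Prop :=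
  ∀ u, ecc G v ≤ ecc G u

/-- a `k`-twin: some other vertex has the same closed `k`-ball. -/
def KTwin {V : Type*} (G : SimpleGraph V) (k : ℕ) (u : V) : Prop :=
  ∃ v, v ≠ u ∧ ball G k u = ball G k v

/-- a diametral leaf: a leaf whose eccentricity equals the diameter. -/
def IsDiametralLeaf {V : Type*} [Fintype V] (G : SimpleGraph V) (u : V) : Prop :=
  IsLeaf G u ∧ ecc G u = gdiam G

/-- a `k`-special pair. -/
def KSpecial {V : Type*} [Fintype V] (G : SimpleGraph V) (k : ℕ) (x y : V) : Prop :=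
  IsDiametralLeaf G x ∧ IsDiametralLeaf G y ∧ KTwin G k x ∧ KTwin G k y ∧
    ball G k x ≠ ball G k y

/-- `mdi*_k(G, ℓ)`. -/
noncomputable def mdiStar {V : Type*} (G : SimpleGraph V) (k : ℕ) (ℓ : V) : ℕ :=
  {J : Set V | MaxDkIndep G k J ∧ ℓ ∈ J ∧ ∃ w ∉ J, ball G k w ∩ J = {ℓ}}.ncard

/-- The spider tree `S_{p,m}`: a center (`none`) together with `p` legs of `m` vertices. -/
def spider (p m : ℕ) : SimpleGraph (Option (Fin p × Fin m)) :=
  SimpleGraph.fromRel fun a b =>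
    match a, b with
    | none, some (_, j) => (j : ℕ) = 0
    | some (i, j), some (i', j') => i = i' ∧ (j : ℕ) + 1 = (j' : ℕ)
    | _, _ => False

/-- `S'_{p,m}`: the spider `S_{p,m}` with one leaf at distance `m` from the center removed. -/
def spider' (p m : ℕ) (hp : 0 < p) (hm : 0 < m) :=
  (spider p m).induce
    {v | v ≠ some (⟨0, hp⟩, ⟨m - 1, Nat.sub_lt hm Nat.one_pos⟩)}

/-- The double spider `B_{p₁,p₂,s}`: two adjacent centers (`Sum.inl false`, `Sum.inl true`),
with `p₁` legs of `s` vertices on the first and `p₂` legs of `s` vertices on the second. -/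
def btree (p₁ p₂ s : ℕ) : SimpleGraph (Bool ⊕ ((Fin p₁ ⊕ Fin p₂) × Fin s)) :=
  SimpleGraph.fromRel fun a b =>
    match a, b with
    | Sum.inl x, Sum.inl y => x ≠ y
    | Sum.inl false, Sum.inr (Sum.inl _, j) => (j : ℕ) = 0
    | Sum.inl true, Sum.inr (Sum.inr _, j) => (j : ℕ) = 0
    | Sum.inr (c, j), Sum.inr (c', j') => c = c' ∧ (j : ℕ) + 1 = (j' : ℕ)
    | _, _ => False

/-- `G` contains a subgraph isomorphic to `H`. -/
def ContainsSub {V W : Type*} (G : SimpleGraph V) (H : SimpleGraph W) : Prop :=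
  ∃ f : W → V, Function.Injective f ∧ ∀ a b, H.Adj a b → G.Adj (f a) (f b)

/-- A pendant path on `s` vertices `P 0, …, P (s-1)` attached to `w`:
`P 0` is a leaf, consecutive vertices are adjacent, interior vertices have degree 2,
and `P (s-1)` is adjacent to `w`. -/
def IsPendantPath {V : Type*} (T : SimpleGraph V) (s : ℕ) (P : ℕ → V) (w : V) : Prop :=
  Set.InjOn P (Set.Iio s) ∧ (∀ i < s, P i ≠ w) ∧ IsLeaf T (P 0) ∧
    (∀ i, i + 1 < s → T.Adj (P i) (P (i + 1))) ∧
    (∀ i, 0 < i → i < s → (T.neighborSet (P i)).ncard = 2) ∧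
    T.Adj (P (s - 1)) w

/-- Isomorphism of simple graphs on `Fin n` as a setoid. -/
def graphSetoid (n : ℕ) : Setoid (SimpleGraph (Fin n)) where
  r G H := Nonempty (G ≃g H)
  iseqv := ⟨fun _ => ⟨SimpleGraph.Iso.refl⟩, fun ⟨e⟩ => ⟨e.symm⟩, fun ⟨e⟩ ⟨f⟩ => ⟨e.trans f⟩⟩

/-- The number of isomorphism classes of graphs in a set of graphs on `Fin n`. -/
noncomputable def numIsoClasses {n : ℕ} (S : Set (SimpleGraph (Fin n))) : ℕ :=
  ((fun G => Quotient.mk (graphSetoid n) G) '' S).ncard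

/-! A tree `T` of diameter `2m + 3` has a middle edge `ab`; every vertex lies within `m + 1` of the
end of `ab` on its own side. Choose `R` maximal distance-`(2m + 1)` independent among the vertices
at distance exactly `m + 1` from the nearer end. Whenever `v` and `w` are more than `2m + 1` apart,
some element of `R` is far from `v` but not from `w`; hence adding to any vertex `v` all elements of
`R` far from it yields a maximal distance-`(2m + 1)` independent set. These sets are distinct for
`v ∉ R` and differ from `R`, so there are at least `n + 1 - |R|` of them. The balls of radius `m`
around `R` are disjoint, contain at least `m + 1` vertices each and avoid `a` and `b`, so
`|R| (m + 1) + 2 ≤ n`, which for `n = p (m + 1) + 1` forces `|R| < p`. -/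

section Connected

variable {V : Type*} {G : SimpleGraph V}

lemma dist_add_dist_of_mem_support {u v x : V} {P : G.Walk u v} (hP : P.length = G.dist u v)
    (hx : x ∈ P.support) : G.dist u x + G.dist x v = G.dist u v := by
  classical
  rw [← SimpleGraph.length_eq_dist_of_subwalk hP (P.isSubwalk_takeUntil hx),
    ← SimpleGraph.length_eq_dist_of_subwalk hP (P.isSubwalk_dropUntil hx), ← hP,
    ← SimpleGraph.Walk.length_append, P.take_spec hx]

lemma exists_dist_eq_and_add_dist_eq (hG : G.Connected) {u v : V} {i : ℕ} (hi : i ≤ G.dist u v) :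
    ∃ z, G.dist u z = i ∧ i + G.dist z v = G.dist u v := by
  obtain ⟨P, hP⟩ := hG.exists_walk_length_eq_dist u v
  have hsum := dist_add_dist_of_mem_support hP (P.getVert_mem_support i)
  have htake := SimpleGraph.dist_le (P.take i)
  have hdrop := SimpleGraph.dist_le (P.drop i)
  rw [SimpleGraph.Walk.take_length] at htake
  rw [SimpleGraph.Walk.drop_length] at hdrop
  exact ⟨P.getVert i, by omega, by omega⟩

lemma dist_le_gdiam [Fintype V] (u v : V) : G.dist u v ≤ gdiam G :=
  (Finset.le_sup (f := G.dist u) (Finset.mem_univ v)).trans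
    (Finset.le_sup (f := ecc G) (Finset.mem_univ u))

lemma exists_dist_eq_gdiam [Fintype V] [Nonempty V] (G : SimpleGraph V) :
    ∃ u v, G.dist u v = gdiam G := by
  obtain ⟨u, -, hu⟩ := Finset.exists_mem_eq_sup _ Finset.univ_nonempty (ecc G)
  obtain ⟨v, -, hv⟩ := Finset.exists_mem_eq_sup _ Finset.univ_nonempty (G.dist u)
  exact ⟨u, v, (hu.trans hv).symm⟩

lemma gdiam_lt_card [Fintype V] (hG : G.Connected) : gdiam G < Fintype.card V := by
  have := hG.nonempty
  obtain ⟨u, v, huv⟩ := exists_dist_eq_gdiam G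
  obtain ⟨P, hP, hlength⟩ := hG.exists_path_of_dist u v
  exact huv ▸ hlength ▸ hP.length_lt

/-- The vertices strictly closer to `a` than to `b`. When `ab` is an edge of a tree, this is the
component of `a` once that edge is removed. -/
def side (G : SimpleGraph V) (a b : V) : Set V :=
  {v | G.dist v a < G.dist v b}

lemma mem_side {a b v : V} : v ∈ side G a b ↔ G.dist v a < G.dist v b :=
  Iff.rfl

lemma reachable_deleteEdges_of_mem_side (hG : G.Connected) {a b v : V}
    (hv : v ∈ side G a b) : (G.deleteEdges {s(a, b)}).Reachable v a := by
  rw [SimpleGraph.reachable_deleteEdges_iff_exists_walk]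
  obtain ⟨P, hP⟩ := hG.exists_walk_length_eq_dist v a
  refine ⟨P, fun hab => (mem_side.1 hv).not_ge ?_⟩
  exact (Nat.le_add_right _ _).trans_eq
    (dist_add_dist_of_mem_support hP (P.snd_mem_support_of_mem_edges hab))

end Connected

section Tree

variable {V : Type*} {T : SimpleGraph V}

lemma mem_side_or_mem_side (hT : T.IsTree) {a b : V} (hab : T.Adj a b) (v : V) :
    v ∈ side T a b ∨ v ∈ side T b a :=
  (hT.dist_ne_of_adj v hab).lt_or_gt

lemma dist_eq_of_mem_side (hT : T.IsTree) {a b v : V} (hab : T.Adj a b) (hv : v ∈ side T a b) :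
    T.dist v b = T.dist v a + 1 := by
  have hlt := mem_side.1 hv
  have := hT.dist_eq_dist_add_one_of_adj v hab
  omega

lemma dist_eq_of_mem_side_of_mem_side (hT : T.IsTree) {a b v w : V} (hab : T.Adj a b)
    (hv : v ∈ side T a b) (hw : w ∈ side T b a) :
    T.dist v w = T.dist v a + 1 + T.dist w b := by
  obtain ⟨P, hP⟩ := hT.connected.exists_walk_length_eq_dist v w
  have hbridge : ¬(T.deleteEdges {s(a, b)}).Reachable a b :=
    SimpleGraph.isBridge_iff.1 <|
      SimpleGraph.isAcyclic_iff_forall_isBridge.1 hT.isAcyclic (T.mem_edgeSet.2 hab)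
  have hmem : s(a, b) ∈ P.edges := by
    by_contra hnot
    have hva := reachable_deleteEdges_of_mem_side hT.connected hv
    have hwb := reachable_deleteEdges_of_mem_side hT.connected hw
    rw [Sym2.eq_swap] at hwb
    have hvw := SimpleGraph.reachable_deleteEdges_iff_exists_walk.2 ⟨P, hnot⟩
    exact hbridge (hva.symm.trans (hvw.trans hwb))
  rw [← dist_add_dist_of_mem_support hP (P.fst_mem_support_of_mem_edges hmem),
    SimpleGraph.dist_comm (u := a), dist_eq_of_mem_side hT hab.symm hw]
  ring

/-- The hypotheses say that `a` is not between `u` and `x`, nor between `x` and `w`, so that `u`,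
`x` and `w` all lie in one branch of the tree at `a`. -/
lemma dist_lt_dist_add_dist_trans (hT : T.IsTree) {a u x w : V}
    (hux : T.dist u x < T.dist u a + T.dist x a) (hwx : T.dist w x < T.dist w a + T.dist x a) :
    T.dist u w < T.dist u a + T.dist w a := by
  have hxa : T.dist x a ≠ 0 := fun h => by
    rw [hT.connected.dist_eq_zero_iff.1 h] at hux
    simp at hux
  obtain ⟨c, hac, hcx⟩ := exists_dist_eq_and_add_dist_eq hT.connected (u := a) (v := x) (i := 1)
    (by rw [SimpleGraph.dist_comm]; omega)
  rw [SimpleGraph.dist_comm (u := c), SimpleGraph.dist_comm (u := a)] at hcx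
  have hadj : T.Adj a c := SimpleGraph.dist_eq_one_iff_adj.1 hac
  have hx : x ∈ side T c a := mem_side.2 (by omega)
  have dist_a {y : V} (hy : T.dist y x < T.dist y a + T.dist x a) :
      T.dist y a = T.dist y c + 1 := by
    rcases mem_side_or_mem_side hT hadj y with hya | hyc
    · have := dist_eq_of_mem_side_of_mem_side hT hadj hya hx
      omega
    · exact dist_eq_of_mem_side hT hadj.symm hyc
  have htriangle := hT.connected.dist_triangle (u := u) (v := c) (w := w)
  rw [SimpleGraph.dist_comm (u := c)] at htriangle
  rw [dist_a hux, dist_a hwx]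
  omega

/-- `ab` is the middle edge of a longest path, whose length is `2 * r + 1`: both sides of `ab` have
height exactly `r`. -/
structure IsMidEdge (T : SimpleGraph V) (r : ℕ) (a b : V) : Prop where
  adj : T.Adj a b
  dist_le_left : ∀ v ∈ side T a b, T.dist v a ≤ r
  dist_le_right : ∀ v ∈ side T b a, T.dist v b ≤ r
  exists_left : ∃ v ∈ side T a b, T.dist v a = r
  exists_right : ∃ v ∈ side T b a, T.dist v b = r

/-- The vertices at distance at least `r` from both `a` and `b`. For a middle edge these are the
vertices at distance exactly `r` from the nearer end, that is, the ends of the longest paths. -/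
def rim (G : SimpleGraph V) (r : ℕ) (a b : V) : Set V :=
  {v | r ≤ G.dist v a ∧ r ≤ G.dist v b}

lemma rim_comm (G : SimpleGraph V) (r : ℕ) (a b : V) : rim G r a b = rim G r b a :=
  Set.ext fun _ => and_comm

lemma exists_isMidEdge (hT : T.IsTree) {r : ℕ} {x y : V} (hxy : T.dist x y = 2 * r + 1)
    (hle : ∀ u v, T.dist u v ≤ 2 * r + 1) : ∃ a b, IsMidEdge T r a b := by
  obtain ⟨a, hxa, hay⟩ := exists_dist_eq_and_add_dist_eq hT.connected (u := x) (v := y) (i := r)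
    (by omega)
  obtain ⟨b, hab, hby⟩ := exists_dist_eq_and_add_dist_eq hT.connected (u := a) (v := y) (i := 1)
    (by omega)
  have hadj : T.Adj a b := SimpleGraph.dist_eq_one_iff_adj.1 hab
  have htriangle := hT.connected.dist_triangle (u := x) (v := b) (w := y)
  rw [SimpleGraph.dist_comm (u := a)] at hay hby
  rw [SimpleGraph.dist_comm (u := b)] at hby htriangle
  have hx : x ∈ side T a b := mem_side.2 (by omega)
  have hy : y ∈ side T b a := mem_side.2 (by omega)
  refine ⟨a, b, hadj, fun v hv => ?_, fun v hv => ?_, ⟨x, hx, hxa⟩, ⟨y, hy, by omega⟩⟩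
  · have := dist_eq_of_mem_side_of_mem_side hT hadj hv hy
    have := hle v y
    omega
  · have := dist_eq_of_mem_side_of_mem_side hT hadj hx hv
    have := hle x v
    omega

namespace IsMidEdge

variable {r : ℕ} {a b v : V}

lemma symm (h : IsMidEdge T r a b) : IsMidEdge T r b a :=
  ⟨h.adj.symm, h.dist_le_right, h.dist_le_left, h.exists_right, h.exists_left⟩

lemma mem_rim_iff (h : IsMidEdge T r a b) (hv : v ∈ side T a b) :
    v ∈ rim T r a b ↔ T.dist v a = r := by
  have hlt := mem_side.1 hv
  have hle := h.dist_le_left v hv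
  change r ≤ T.dist v a ∧ r ≤ T.dist v b ↔ _
  omega

end IsMidEdge

end Tree

section Independent

variable {V : Type*} {G : SimpleGraph V} {k : ℕ} {R : Set V}

lemma DkIndep.insert {v : V} (hR : DkIndep G k R) (hv : ∀ x ∈ R, v ≠ x → k + 1 ≤ G.dist v x) :
    DkIndep G k (insert v R) :=
  Set.Pairwise.insert hR fun x hx hne =>
    ⟨hv x hx hne, SimpleGraph.dist_comm (G := G) (u := v) ▸ hv x hx hne⟩

lemma exists_dkIndep_subset_dominating [Finite V] (G : SimpleGraph V) (k : ℕ) (L : Set V) :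
    ∃ R ⊆ L, DkIndep G k R ∧ ∀ w ∈ L, ∃ x ∈ R, G.dist w x ≤ k := by
  obtain ⟨R, hR⟩ := (Set.toFinite {R : Set V | R ⊆ L ∧ DkIndep G k R}).exists_maximal
    ⟨∅, Set.empty_subset L, Set.pairwise_empty _⟩
  refine ⟨R, hR.prop.1, hR.prop.2, fun w hw => ?_⟩
  by_contra! hfar
  have hwR : w ∈ R := hR.mem_of_prop_insert
    ⟨Set.insert_subset hw hR.prop.1, hR.prop.2.insert fun x hx _ => hfar x hx⟩
  simpa using hfar w hwR

/-- The balls of radius `m` around the points of a distance-`(2 * m + 1)` independent set are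
disjoint, and each contains at least `m + 1` vertices of a shortest path leaving it. -/
lemma DkIndep.ncard_mul_add_ncard_le [Finite V] (hG : G.Connected) {m : ℕ} {C : Set V}
    (hR : DkIndep G (2 * m + 1) R) (hC : C.Nonempty)
    (hfar : ∀ x ∈ R, ∀ c ∈ C, m + 1 ≤ G.dist x c) :
    R.ncard * (m + 1) + C.ncard ≤ Nat.card V := by
  obtain ⟨c, hc⟩ := hC
  have exists_dist_eq (x : R) (i : Fin (m + 1)) : ∃ z, G.dist x z = i := by
    have := hfar x x.2 c hc
    obtain ⟨z, hz, -⟩ := exists_dist_eq_and_add_dist_eq hG (u := x.1) (v := c) (i := i) (by omega)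
    exact ⟨z, hz⟩
  choose z hz using exists_dist_eq
  have z_notMem (q : R × Fin (m + 1)) : z q.1 q.2 ∈ Cᶜ := fun hmem => by
    have := hfar q.1 q.1.2 _ hmem
    have := hz q.1 q.2
    omega
  have z_injective : Function.Injective fun q : R × Fin (m + 1) =>
      (⟨z q.1 q.2, z_notMem q⟩ : (Cᶜ : Set V)) := by
    rintro ⟨x, i⟩ ⟨y, j⟩ heq
    have hzz : z x i = z y j := congrArg Subtype.val heq
    have hxi := hz x i
    have hyj := hz y j
    have hxy : x = y := by
      by_contra hne
      have hdist := hR x.2 y.2 (Subtype.coe_ne_coe.2 hne)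
      have htriangle := hG.dist_triangle (u := x.1) (v := z x i) (w := y.1)
      rw [SimpleGraph.dist_comm (u := z x i), hxi, hzz, hyj] at htriangle
      omega
    subst hxy
    exact Prod.ext rfl (Fin.ext (hxi.symm.trans (hzz ▸ hyj)))
  have hcard := Nat.card_le_card_of_injective _ z_injective
  rw [Nat.card_prod, Nat.card_fin, Nat.card_coe_set_eq, Nat.card_coe_set_eq] at hcard
  have := Set.ncard_add_ncard_compl C
  omega

/-- Whenever `w` could be added to a distance-`k` independent set containing `v`, some element of
`R` compatible with `v` prevents it. This is what makes every `farExtension` of `R` maximal. -/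
def IsFarSeparating (G : SimpleGraph V) (k : ℕ) (R : Set V) : Prop :=
  ∀ ⦃v w⦄, k + 1 ≤ G.dist v w → ∃ x ∈ R, k + 1 ≤ G.dist v x ∧ G.dist w x ≤ k

/-- The vertex `v` together with all elements of `R` that are at distance more than `k` from it. -/
def farExtension (G : SimpleGraph V) (k : ℕ) (R : Set V) (v : V) : Set V :=
  insert v {x ∈ R | k + 1 ≤ G.dist v x}

lemma mem_farExtension_self (v : V) : v ∈ farExtension G k R v :=
  Set.mem_insert v _

lemma maxDkIndep_farExtension (hR : DkIndep G k R) (hsep : IsFarSeparating G k R) (v : V) :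
    MaxDkIndep G k (farExtension G k R v) := by
  refine ⟨DkIndep.insert (Set.Pairwise.mono (Set.sep_subset R _) hR) fun x hx _ => hx.2,
    fun J hJ hsub => Set.Subset.antisymm (fun w hw => ?_) hsub⟩
  rcases eq_or_ne v w with rfl | hvw
  · exact mem_farExtension_self v
  obtain ⟨x, hxR, hvx, hwx⟩ := hsep (hJ (hsub (mem_farExtension_self v)) hw hvw)
  have hx : x ∈ farExtension G k R v := Or.inr ⟨hxR, hvx⟩
  rcases eq_or_ne w x with rfl | hne
  · exact hx
  · exact absurd (hJ hw (hsub hx) hne) (by omega)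

lemma farExtension_eq_of_mem (hR : DkIndep G k R) {v : V} (hv : v ∈ R) :
    farExtension G k R v = R := by
  refine Set.Subset.antisymm (Set.insert_subset hv (Set.sep_subset R _)) fun x hx => ?_
  rcases eq_or_ne v x with rfl | hne
  · exact mem_farExtension_self v
  · exact Or.inr ⟨hx, hR hv hx hne⟩

lemma injOn_farExtension_compl : Set.InjOn (farExtension G k R) Rᶜ := by
  intro u hu v _ heq
  have hmem : u ∈ farExtension G k R v := heq ▸ mem_farExtension_self u
  exact hmem.resolve_right fun h => hu h.1

theorem IsFarSeparating.card_add_one_le_mdi_add_ncard [Finite V] (hsep : IsFarSeparating G k R)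
    (hR : DkIndep G k R) (hne : R.Nonempty) : Nat.card V + 1 ≤ mdi G k + R.ncard := by
  have hmax : MaxDkIndep G k R := by
    obtain ⟨v, hv⟩ := hne
    exact farExtension_eq_of_mem hR hv ▸ maxDkIndep_farExtension hR hsep v
  have hnotMem : R ∉ farExtension G k R '' Rᶜ := by
    rintro ⟨v, hv, heq⟩
    exact hv (heq ▸ mem_farExtension_self v)
  have hsub : insert R (farExtension G k R '' Rᶜ) ⊆ {J | MaxDkIndep G k J} :=
    Set.insert_subset hmax (Set.image_subset_iff.2 fun v _ => maxDkIndep_farExtension hR hsep v)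
  have hmdi : Rᶜ.ncard + 1 ≤ mdi G k := by
    rw [← injOn_farExtension_compl.ncard_image, ← Set.ncard_insert_of_notMem hnotMem]
    exact Set.ncard_le_ncard hsub
  have := Set.ncard_add_ncard_compl R
  omega

end Independent

section MidEdge

variable {V : Type*} {T : SimpleGraph V} {m : ℕ} {a b : V} {R : Set V}

lemma IsMidEdge.exists_mem_side_dist_le (hT : T.IsTree) (h : IsMidEdge T (m + 1) a b)
    (hR : R ⊆ rim T (m + 1) a b)
    (hdom : ∀ w ∈ rim T (m + 1) a b, ∃ x ∈ R, T.dist w x ≤ 2 * m + 1)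
    {w : V} (hw : w ∈ side T a b) : ∃ x ∈ R, x ∈ side T a b ∧ T.dist w x ≤ 2 * m + 1 := by
  have of_mem_rim {y : V} (hy : y ∈ side T a b) (hya : T.dist y a = m + 1) :
      ∃ x ∈ R, x ∈ side T a b ∧ T.dist y x ≤ 2 * m + 1 := by
    obtain ⟨x, hxR, hyx⟩ := hdom y ((h.mem_rim_iff hy).2 hya)
    refine ⟨x, hxR, (mem_side_or_mem_side hT h.adj x).resolve_right fun hx => ?_, hyx⟩
    have := dist_eq_of_mem_side_of_mem_side hT h.adj hy hx
    have := (hR hxR).2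
    omega
  rcases (h.dist_le_left w hw).eq_or_lt with hwa | hwa
  · exact of_mem_rim hw hwa
  · obtain ⟨y, hy, hya⟩ := h.exists_left
    obtain ⟨x, hxR, hx, -⟩ := of_mem_rim hy hya
    refine ⟨x, hxR, hx, ?_⟩
    have hxa := h.dist_le_left x hx
    have htriangle := hT.connected.dist_triangle (u := w) (v := a) (w := x)
    rw [SimpleGraph.dist_comm (u := a)] at htriangle
    omega

lemma IsMidEdge.isFarSeparating (hT : T.IsTree) (h : IsMidEdge T (m + 1) a b)
    (hR : R ⊆ rim T (m + 1) a b)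
    (hdom : ∀ w ∈ rim T (m + 1) a b, ∃ x ∈ R, T.dist w x ≤ 2 * m + 1) :
    IsFarSeparating T (2 * m + 1) R := by
  intro v w hvw
  wlog hw : w ∈ side T a b generalizing a b
  · rw [rim_comm] at hR hdom
    exact this h.symm hR hdom ((mem_side_or_mem_side hT h.adj w).resolve_left hw)
  obtain ⟨x, hxR, hx, hwx⟩ := h.exists_mem_side_dist_le hT hR hdom hw
  have hxa : T.dist x a = m + 1 := (h.mem_rim_iff hx).1 (hR hxR)
  have hwa := h.dist_le_left w hw
  refine ⟨x, hxR, ?_, hwx⟩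
  rcases mem_side_or_mem_side hT h.adj v with hv | hv
  · have hva := h.dist_le_left v hv
    have htriangle := hT.connected.dist_triangle (u := v) (v := a) (w := w)
    rw [SimpleGraph.dist_comm (u := a)] at htriangle
    by_contra! hvx
    have := dist_lt_dist_add_dist_trans hT (a := a) (u := v) (x := x) (w := w) (by omega) (by omega)
    omega
  · have hwv := dist_eq_of_mem_side_of_mem_side hT h.adj hw hv
    have hxv := dist_eq_of_mem_side_of_mem_side hT h.adj hx hv
    rw [SimpleGraph.dist_comm] at hwv hxv
    omega

end MidEdge

theorem card_add_one_le_mdi_add_div {V : Type*} [Fintype V] {T : SimpleGraph V} (hT : T.IsTree)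
    {m : ℕ} (hdiam : gdiam T = 2 * m + 3) :
    Fintype.card V + 1 ≤ mdi T (2 * m + 1) + (Fintype.card V - 2) / (m + 1) := by
  have := hT.connected.nonempty
  obtain ⟨x, y, hxy⟩ := exists_dist_eq_gdiam T
  obtain ⟨a, b, hab⟩ := exists_isMidEdge hT (r := m + 1) (hxy.trans hdiam) fun u v =>
    (dist_le_gdiam u v).trans_eq hdiam
  obtain ⟨R, hRrim, hR, hdom⟩ :=
    exists_dkIndep_subset_dominating T (2 * m + 1) (rim T (m + 1) a b)
  have hne : R.Nonempty := by
    obtain ⟨w, hw, -⟩ := hab.exists_left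
    obtain ⟨z, hzR, -⟩ := hab.exists_mem_side_dist_le hT hRrim hdom hw
    exact ⟨z, hzR⟩
  have hmdi := (hab.isFarSeparating hT hRrim hdom).card_add_one_le_mdi_add_ncard hR hne
  have hcard := hR.ncard_mul_add_ncard_le hT.connected (Set.insert_nonempty a {b}) (by
    rintro z hz c (rfl | rfl)
    exacts [(hRrim hz).1, (hRrim hz).2])
  rw [Set.ncard_pair hab.adj.ne, Nat.card_eq_fintype_card] at hcard
  have hdiv : R.ncard ≤ (Fintype.card V - 2) / (m + 1) :=
    (Nat.le_div_iff_mul_le m.succ_pos).2 (Nat.le_sub_of_add_le hcard)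
  rw [Nat.card_eq_fintype_card] at hmdi
  omega

lemma fk_two_mul_add_one {m p : ℕ} (hp : 2 ≤ p) :
    fk (2 * m + 1) (p * (m + 1) + 1) = p * m + 2 := by
  have hlt : ¬p * (m + 1) + 1 ≤ 2 * m + 1 + 1 := by nlinarith
  have hhalf : (2 * m + 1) / 2 = m := by omega
  have hmod : (2 * m + 1) % 2 = 1 := by omega
  rw [fk, if_neg hlt, hhalf, hmod, Nat.add_sub_cancel, Nat.mul_div_cancel p m.succ_pos, mul_add_one]
  omega

theorem stmt_16_general {k p : ℕ} (hodd : Odd k) {V : Type*} [Fintype V] {T : SimpleGraph V}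
    (hT : T.IsTree) (hcard : Fintype.card V = p * (k / 2 + 1) + 1) (hdiam : gdiam T = k + 2) :
    fk k (Fintype.card V) < mdi T k := by
  obtain ⟨m, rfl⟩ := hodd
  rw [show (2 * m + 1) / 2 = m by omega] at hcard
  have hp : 2 ≤ p := by
    have := gdiam_lt_card hT.connected
    nlinarith
  have hmdi := card_add_one_le_mdi_add_div hT hdiam
  have hdiv : (Fintype.card V - 2) / (m + 1) < p := by
    have hpos : 0 < p * (m + 1) := Nat.mul_pos (by omega) m.add_one_pos
    rw [Nat.div_lt_iff_lt_mul m.add_one_pos]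
    omega
  calc
    fk (2 * m + 1) (Fintype.card V) = p * m + 2 := by rw [hcard, fk_two_mul_add_one hp]
    _ < mdi T (2 * m + 1) := by
      rw [mul_add_one] at hcard
      omega

/-- Let `k ≥ 3` be odd, `p ≥ 2`, and let `T` be a tree on
`n = p(⌊k/2⌋+1) + 1` vertices of diameter exactly `k + 2`. Then `mdi_k(T) > f_k(n)`. -/
theorem stmt_16 (k : ℕ) (hk : 3 ≤ k) (hodd : Odd k) (p : ℕ) (hp : 2 ≤ p)
    {V : Type} [Fintype V] {n : ℕ} (hn : Fintype.card V = n)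
    (hnval : n = p * (k / 2 + 1) + 1)
    (T : SimpleGraph V) (hT : T.IsTree) (hdiam : gdiam T = k + 2) :
    fk k n < mdi T k := by
  subst hn
  exact stmt_16_general hodd hT hnval hdiam
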